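/- Let k₁/k be a separable algebraic field extension, V a finite-dimensional k-vector space, and H a group acting k-linearly on V. Then V is a semisimple k[H]-module if and only if V ⊗_k k₁ is a semisimple k₁[H]-module. -/

import Mathlib

open TensorProduct

/-- Extension of scalars of a representation: `H` acts on `k₁ ⊗[k] V` via
`h · (c ⊗ v) = c ⊗ (h · v)`. -/
noncomputable def Representation.extendScalars {k V H : Type*} (k₁ : Type*)
    [CommRing k] [CommRing k₁] [Algebra k k₁] [AddCommGroup V] [Module k V] [Monoid H]
    (ρ : Representation k H V) : Representation k₁ H (k₁ ⊗[k] V) where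
  toFun h := LinearMap.baseChange k₁ (ρ h)
  map_one' := by ext v; simp
  map_mul' g h := by ext v; simp

/-!
A representation is semisimple if and only if every subrepresentation is the image of an equivariant
projection, so it is enough to transport such projections along `k → K`.

*Ascent.* Over `k`, the representation `K ⊗ V` is a sum of copies of `V`, so a `K`-subrepresentation
`U` has an equivariant `k`-linear projection. Since `U` is finitely generated, it is spanned over
`K` by elements of `L ⊗ V` for some finite separable `L/k`. Averaging the projection over the
separability idempotent of `L ⊗ L` makes it `L`-linear; the `K`-linear map with the same values on
`1 ⊗ V` then has the same values on `L ⊗ V`, so it still fixes `U` pointwise.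

*Descent.* Restrict an equivariant projection onto `K ⊗ W` to `1 ⊗ V` and contract it with a
`k`-linear form on `K` that maps `1` to `1`.
-/

open Representation LinearMap

section Representations

variable {k V H : Type*} [Field k] [AddCommGroup V] [Module k V] [Monoid H]

theorem isSemisimpleRepresentation_iff_exists_isProj (ρ : Representation k H V) :
    IsSemisimpleRepresentation ρ ↔
      ∀ W : Subrepresentation ρ, ∃ p : V →ₗ[k] V,
        IsProj W.toSubmodule p ∧ ∀ h, Commute p (ρ h) := by
  constructor
  · intro _ W
    obtain ⟨W', hWW'⟩ := exists_isCompl W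
    have hc : IsCompl W.toSubmodule W'.toSubmodule :=
      .of_eq (congrArg Subrepresentation.toSubmodule hWW'.inf_eq_bot)
        (congrArg Subrepresentation.toSubmodule hWW'.sup_eq_top)
    refine ⟨W.toSubmodule.projection W'.toSubmodule hc,
      ⟨Submodule.projection_apply_mem hc, fun w ↦ Submodule.projection_apply_of_mem_left hc⟩,
      fun h ↦ ?_⟩
    rw [(Submodule.isIdempotentElem_projection hc).commute_iff, Submodule.range_projection,
      Submodule.ker_projection]
    exact ⟨W.apply_mem_toSubmodule h, W'.apply_mem_toSubmodule h⟩
  · refine fun hproj ↦ ⟨fun W ↦ ?_⟩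
    obtain ⟨p, hp, hpρ⟩ := hproj W
    have ker_invariant : ∀ h, ker p ∈ Module.End.invtSubmodule (ρ h) := fun h ↦
      (hp.isIdempotentElem.commute_iff.mp (hpρ h)).2
    refine ⟨⟨ker p, ker_invariant⟩, disjoint_iff.mpr ?_, codisjoint_iff.mpr ?_⟩
    · exact Subrepresentation.toSubmodule_injective hp.isCompl.inf_eq_bot
    · exact Subrepresentation.toSubmodule_injective hp.isCompl.sup_eq_top

theorem isSemisimpleRepresentation_trivial_tprod (ρ : Representation k H V) (M : Type*)
    [AddCommGroup M] [Module k M] [IsSemisimpleRepresentation ρ] :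
    IsSemisimpleRepresentation ((trivial k H M).tprod ρ) := by
  rw [isSemisimpleRepresentation_iff_isSemisimpleModule_asModule]
  have := (isSemisimpleRepresentation_iff_isSemisimpleModule_asModule ρ).mp ‹_›
  let incl (m : M) : IntertwiningMap ρ ((trivial k H M).tprod ρ) :=
    ⟨TensorProduct.mk k M V m, fun _ ↦ rfl⟩
  let copy (m : M) := range (IntertwiningMap.equivLinearMapAsModule _ _ (incl m))
  refine isSemisimpleModule_of_isSemisimpleModule_submodule' (p := copy) (fun _ ↦ .range _) ?_
  refine Submodule.eq_top_iff'.mpr fun x ↦ ?_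
  induction x using TensorProduct.induction_on with
  | zero => exact zero_mem (⨆ m, copy m)
  | tmul m v => exact Submodule.mem_iSup_of_mem (p := copy) m ⟨v, rfl⟩
  | add x y hx hy => exact add_mem (S := Submodule (MonoidAlgebra k H) _) hx hy

end Representations

section UnramifiedAverage

open Algebra.FormallyUnramified (elem sec comp_sec)

variable {R : Type*} (S : Type*) {M N P : Type*} [CommRing R] [CommRing S] [Algebra R S]
  [Algebra.FormallyUnramified R S] [Algebra.EssFiniteType R S]
  [AddCommGroup M] [Module R M] [Module S M] [IsScalarTower R S M]
  [AddCommGroup N] [Module R N] [Module S N] [IsScalarTower R S N]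
  [AddCommGroup P] [Module R P] [Module S P] [IsScalarTower R S P]

/-- The average `m ↦ ∑ aᵢ • f (bᵢ • m)` of an `R`-linear map `f` over an unramified `R`-algebra `S`,
where `∑ aᵢ ⊗ bᵢ` is the separability idempotent `Algebra.FormallyUnramified.elem R S`. It plays
the role that averaging over the group plays in Maschke's theorem. -/
noncomputable def unramifiedAverage (f : M →ₗ[R] N) : M →ₗ[S] N :=
  f.liftBaseChange S ∘ₗ sec R S M

theorem formallyUnramified_sec_apply_map (f : M →ₗ[S] N) (m : M) :
    sec R S N (f m) = (f.restrictScalars R).baseChange S (sec R S M m) := by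
  simp only [sec, LinearMap.coe_mk, coe_toAddHom, coe_comp, Function.comp_apply, flip_apply,
    TensorProduct.AlgebraTensorModule.mapBilinear_apply]
  induction elem R S using TensorProduct.induction_on with
  | zero => simp
  | tmul a b => simp
  | add s t hs ht => simp only [map_add, hs, ht]

theorem unramifiedAverage_restrictScalars (f : M →ₗ[S] N) :
    unramifiedAverage S (f.restrictScalars R) = f := by
  have hmul : (TensorProduct.AlgebraTensorModule.lift
      ((Algebra.lsmul S S M).toLinearMap.flip.restrictScalars R).flip) =
        (LinearMap.id (R := R)).liftBaseChange S := by
    ext; simp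
  calc unramifiedAverage S (f.restrictScalars R)
      = f ∘ₗ (LinearMap.id (R := R)).liftBaseChange S ∘ₗ sec R S M := by
        rw [← comp_assoc, liftBaseChange_comp, comp_id, unramifiedAverage]
    _ = f := by rw [← hmul, comp_sec, comp_id]

theorem unramifiedAverage_comp_left (g : N →ₗ[S] P) (f : M →ₗ[R] N) :
    unramifiedAverage S (g.restrictScalars R ∘ₗ f) = g ∘ₗ unramifiedAverage S f := by
  rw [unramifiedAverage, unramifiedAverage, ← comp_assoc, liftBaseChange_comp]

theorem unramifiedAverage_comp_right (g : N →ₗ[R] P) (f : M →ₗ[S] N) :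
    unramifiedAverage S (g ∘ₗ f.restrictScalars R) = unramifiedAverage S g ∘ₗ f := by
  have hlift : (g ∘ₗ f.restrictScalars R).liftBaseChange S =
      g.liftBaseChange S ∘ₗ (f.restrictScalars R).baseChange S := by
    ext; simp
  ext m
  simp only [unramifiedAverage, hlift, comp_apply, formallyUnramified_sec_apply_map]

variable {S}

theorem isProj_unramifiedAverage {U : Submodule S M} {p : M →ₗ[R] M}
    (hp : IsProj (U.restrictScalars R) p) : IsProj U (unramifiedAverage S p) where
  map_mem m := by
    have hrange : range (p.liftBaseChange S) ≤ U := by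
      rw [range_liftBaseChange, Submodule.span_le]
      rintro _ ⟨m, rfl⟩
      exact hp.map_mem m
    exact hrange ⟨sec R S M m, rfl⟩
  map_id u hu := by
    have hsubtype : p ∘ₗ U.subtype.restrictScalars R = U.subtype.restrictScalars R :=
      LinearMap.ext fun u ↦ hp.map_id u u.2
    have havg : unramifiedAverage S p ∘ₗ U.subtype = U.subtype := by
      rw [← unramifiedAverage_comp_right, hsubtype, unramifiedAverage_restrictScalars]
    exact LinearMap.congr_fun havg ⟨u, hu⟩

theorem commute_unramifiedAverage {p : M →ₗ[R] M} {f : M →ₗ[S] M}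
    (hpf : Commute p (f.restrictScalars R)) : Commute (unramifiedAverage S p) f :=
  calc unramifiedAverage S p ∘ₗ f
      = unramifiedAverage S (p ∘ₗ f.restrictScalars R) :=
        (unramifiedAverage_comp_right S p f).symm
    _ = unramifiedAverage S (f.restrictScalars R ∘ₗ p) := congrArg _ hpf.eq
    _ = f ∘ₗ unramifiedAverage S p := unramifiedAverage_comp_left S f p

end UnramifiedAverage

section Relinearize

variable {R S A V N : Type*} [CommSemiring R] [CommSemiring S] [CommSemiring A]
  [Algebra R S] [Algebra R A] [Algebra S A] [IsScalarTower R S A]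
  [AddCommMonoid V] [Module R V]
  [AddCommMonoid N] [Module R N] [Module S N] [Module A N] [IsScalarTower R S N]
  [IsScalarTower R A N] [IsScalarTower S A N]

/-- The `A`-linear map on `A ⊗ V` that agrees with the `R`-linear map `f` on `1 ⊗ V`. If `f` is
linear over a subring `S` of `A`, the two still agree on the image of `S ⊗ V`. -/
noncomputable def relinearize (f : A ⊗[R] V →ₗ[R] N) : A ⊗[R] V →ₗ[A] N :=
  (f ∘ₗ TensorProduct.mk R A V 1).liftBaseChange A

theorem relinearize_tmul (f : A ⊗[R] V →ₗ[R] N) (a : A) (v : V) :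
    relinearize f (a ⊗ₜ v) = a • f (1 ⊗ₜ v) := rfl

theorem relinearize_apply_of_mem_span (f : A ⊗[R] V →ₗ[S] N) {x : A ⊗[R] V}
    (hx : x ∈ Submodule.span S (Set.range (TensorProduct.mk R A V 1))) :
    relinearize (f.restrictScalars R) x = f x := by
  refine LinearMap.eqOn_span (f := (relinearize (f.restrictScalars R)).restrictScalars S) ?_ hx
  rintro _ ⟨v, rfl⟩
  simp [relinearize_tmul]

theorem isProj_relinearize {U : Submodule A (A ⊗[R] V)} {p : A ⊗[R] V →ₗ[S] A ⊗[R] V}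
    (hp : IsProj (U.restrictScalars S) p) {s : Set (A ⊗[R] V)} (hsU : Submodule.span A s = U)
    (hs : s ⊆ Submodule.span S (Set.range (TensorProduct.mk R A V 1))) :
    IsProj U (relinearize (p.restrictScalars R)) where
  map_mem x := by
    have hrange : range (relinearize (p.restrictScalars R)) ≤ U := by
      rw [relinearize, range_liftBaseChange, Submodule.span_le]
      rintro _ ⟨v, rfl⟩
      exact hp.map_mem _
    exact hrange ⟨x, rfl⟩
  map_id u hu := by
    have hid : Set.EqOn (relinearize (p.restrictScalars R)) (LinearMap.id (R := A)) s := fun x hx ↦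
      (relinearize_apply_of_mem_span p (hs hx)).trans
        (hp.map_id x (hsU.le (Submodule.subset_span hx)))
    exact LinearMap.eqOn_span hid (hsU.ge hu)

theorem commute_relinearize {p : A ⊗[R] V →ₗ[R] A ⊗[R] V} {f : V →ₗ[R] V}
    (hpf : Commute p ((f.baseChange A).restrictScalars R)) :
    Commute (relinearize p) (f.baseChange A) := by
  apply TensorProduct.AlgebraTensorModule.ext
  intro a v
  have hpv : p (1 ⊗ₜ f v) = f.baseChange A (p (1 ⊗ₜ v)) := LinearMap.congr_fun hpf.eq (1 ⊗ₜ v)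
  simp [relinearize_tmul, hpv]

end Relinearize

section FieldOfDefinition

variable {k K V : Type*} [Field k] [Field K] [Algebra k K] [AddCommMonoid V] [Module k V]

theorem exists_finiteDimensional_subset_span_range_mk [Algebra.IsAlgebraic k K]
    {s : Set (K ⊗[k] V)} (hs : s.Finite) :
    ∃ L : IntermediateField k K, FiniteDimensional k L ∧
      s ⊆ Submodule.span L (Set.range (TensorProduct.mk k K V 1)) := by
  obtain ⟨M, hM, hsM⟩ := TensorProduct.exists_finite_submodule_left_of_setFinite s hs
  obtain ⟨T, rfl⟩ := Module.Finite.iff_fg.mp hM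
  let L := IntermediateField.adjoin k (T : Set K)
  have hTL : Submodule.span k T ≤ Subalgebra.toSubmodule L.toSubalgebra :=
    Submodule.span_le.mpr (IntermediateField.subset_adjoin k _)
  refine ⟨L, IntermediateField.finiteDimensional_adjoin fun x _ ↦
    Algebra.IsIntegral.isIntegral x, fun x hx ↦ ?_⟩
  obtain ⟨y, rfl⟩ := hsM hx
  clear hx
  induction y using TensorProduct.induction_on with
  | zero => simp
  | tmul c v =>
    have hcv : (⟨c, hTL c.2⟩ : L) • ((1 : K) ⊗ₜ[k] v) = (c : K) ⊗ₜ[k] v :=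
      congrArg (· ⊗ₜ[k] v) (mul_one (c : K))
    rw [rTensor_tmul, Submodule.subtype_apply, ← hcv]
    exact Submodule.smul_mem _ _ (Submodule.subset_span ⟨v, rfl⟩)
  | add y z hy hz => rw [map_add]; exact add_mem hy hz

end FieldOfDefinition

section Ascent

variable {k K V H : Type*} [Field k] [Field K] [Algebra k K] [AddCommGroup V] [Module k V]
  [Monoid H]

theorem isSemisimpleRepresentation_extendScalars [Algebra.IsSeparable k K] [FiniteDimensional k V]
    (ρ : Representation k H V) [IsSemisimpleRepresentation ρ] :
    IsSemisimpleRepresentation (ρ.extendScalars K) := by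
  rw [isSemisimpleRepresentation_iff_exists_isProj]
  intro U
  obtain ⟨p, hpU, hpρ⟩ := (isSemisimpleRepresentation_iff_exists_isProj _).mp
    (isSemisimpleRepresentation_trivial_tprod ρ K)
    ⟨U.toSubmodule.restrictScalars k, U.apply_mem_toSubmodule⟩
  obtain ⟨s, hsU⟩ := IsNoetherian.noetherian U.toSubmodule
  obtain ⟨L, _, hsL⟩ := exists_finiteDimensional_subset_span_range_mk s.finite_toSet
  have := Algebra.FormallyUnramified.of_isSeparable k L
  have : IsScalarTower k L (K ⊗[k] V) := TensorProduct.isScalarTower_left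
  have hqU : IsProj (U.toSubmodule.restrictScalars L) (unramifiedAverage L p) :=
    isProj_unramifiedAverage (S := L) hpU
  have hqρ (h : H) :
      Commute (unramifiedAverage L p) (((ρ h).baseChange K).restrictScalars L) :=
    commute_unramifiedAverage (f := ((ρ h).baseChange K).restrictScalars L) (hpρ h)
  exact ⟨relinearize ((unramifiedAverage L p).restrictScalars k),
    isProj_relinearize hqU hsU hsL,
    fun h ↦ commute_relinearize (LinearMap.ext fun x ↦ LinearMap.congr_fun (hqρ h).eq x)⟩

end Ascent

section Contraction

variable {R A V W : Type*} [CommSemiring R] [Semiring A] [Algebra R A]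
  [AddCommMonoid V] [Module R V] [AddCommMonoid W] [Module R W]

/-- The contraction `A ⊗ V → V`, `a ⊗ v ↦ l a • v`, of the first tensor factor along a linear
form `l`. -/
noncomputable def tensorContractLeft (l : A →ₗ[R] R) : A ⊗[R] V →ₗ[R] V :=
  TensorProduct.lid R V ∘ₗ l.rTensor V

theorem tensorContractLeft_tmul (l : A →ₗ[R] R) (a : A) (v : V) :
    tensorContractLeft l (a ⊗ₜ[R] v) = l a • v := by
  simp [tensorContractLeft]

theorem tensorContractLeft_baseChange (l : A →ₗ[R] R) (f : V →ₗ[R] W) (x : A ⊗[R] V) :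
    tensorContractLeft l (f.baseChange A x) = f (tensorContractLeft l x) := by
  induction x using TensorProduct.induction_on with
  | zero => simp
  | tmul a v => simp [tensorContractLeft_tmul]
  | add x y hx hy => simp only [map_add, hx, hy]

/-- The endomorphism `v ↦ (l ⊗ id) (p (1 ⊗ v))` of `V` obtained from an endomorphism `p` of
`A ⊗ V`, which descends projections and equivariant maps from `A ⊗ V` to `V` when `l 1 = 1`. -/
noncomputable def descendAlong (l : A →ₗ[R] R) (p : A ⊗[R] V →ₗ[A] A ⊗[R] V) : V →ₗ[R] V :=
  tensorContractLeft l ∘ₗ p.restrictScalars R ∘ₗ TensorProduct.mk R A V 1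

theorem isProj_descendAlong {l : A →ₗ[R] R} (hl : l 1 = 1) {W : Submodule R V}
    {p : A ⊗[R] V →ₗ[A] A ⊗[R] V} (hp : IsProj (W.baseChange A) p) :
    IsProj W (descendAlong l p) where
  map_mem v := by
    obtain ⟨y, hy⟩ := hp.map_mem (1 ⊗ₜ v)
    change tensorContractLeft l (p (1 ⊗ₜ v)) ∈ W
    rw [← hy, tensorContractLeft_baseChange]
    exact Subtype.property _
  map_id w hw := by
    have hp1 : p (1 ⊗ₜ w) = 1 ⊗ₜ w := hp.map_id _ (Submodule.tmul_mem_baseChange_of_mem 1 hw)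
    change tensorContractLeft l (p (1 ⊗ₜ w)) = w
    rw [hp1, tensorContractLeft_tmul, hl, one_smul]

theorem commute_descendAlong (l : A →ₗ[R] R) {p : A ⊗[R] V →ₗ[A] A ⊗[R] V} {f : V →ₗ[R] V}
    (hpf : Commute p (f.baseChange A)) : Commute (descendAlong l p) f := by
  ext v
  calc tensorContractLeft l (p (f.baseChange A (1 ⊗ₜ v)))
      = tensorContractLeft l (f.baseChange A (p (1 ⊗ₜ v))) :=
        congrArg _ (LinearMap.congr_fun hpf.eq _)
    _ = f (tensorContractLeft l (p (1 ⊗ₜ v))) := tensorContractLeft_baseChange l f _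

end Contraction

section Descent

/-- The subrepresentation `A ⊗ W` of `A ⊗ V`. -/
noncomputable def baseChangeSubrepresentation {R V H : Type*} (A : Type*) [CommRing R] [CommRing A]
    [Algebra R A] [AddCommGroup V] [Module R V] [Monoid H] {ρ : Representation R H V}
    (W : Subrepresentation ρ) : Subrepresentation (ρ.extendScalars A) where
  toSubmodule := W.toSubmodule.baseChange A
  apply_mem_toSubmodule h := by
    rintro _ ⟨y, rfl⟩
    have hcomp : (ρ h).baseChange A ∘ₗ W.toSubmodule.subtype.baseChange A =
        W.toSubmodule.subtype.baseChange A ∘ₗ (W.toRepresentation h).baseChange A := by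
      rw [← baseChange_comp, ← baseChange_comp]
      rfl
    exact ⟨_, (LinearMap.congr_fun hcomp y).symm⟩

theorem isSemisimpleRepresentation_of_extendScalars {k V H : Type*} (K : Type*) [Field k] [Field K]
    [Algebra k K] [AddCommGroup V] [Module k V] [Monoid H] {ρ : Representation k H V}
    [IsSemisimpleRepresentation (ρ.extendScalars K)] : IsSemisimpleRepresentation ρ := by
  rw [isSemisimpleRepresentation_iff_exists_isProj]
  intro W
  obtain ⟨l, hl⟩ := Module.Projective.exists_dual_eq_one k (one_ne_zero (α := K))
  obtain ⟨p, hpW, hpρ⟩ := (isSemisimpleRepresentation_iff_exists_isProj _).mp ‹_›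
    (baseChangeSubrepresentation K W)
  exact ⟨descendAlong l p, isProj_descendAlong hl hpW, fun h ↦ commute_descendAlong l (hpρ h)⟩

end Descent

theorem semisimple_iff_semisimple_extendScalars_of_separable_general
    {k K V H : Type*} [Field k] [Field K] [Algebra k K] [Algebra.IsSeparable k K]
    [AddCommGroup V] [Module k V] [FiniteDimensional k V] [Monoid H]
    (ρ : Representation k H V) :
    IsSemisimpleModule (MonoidAlgebra k H) ρ.asModule ↔
      IsSemisimpleModule (MonoidAlgebra K H) (ρ.extendScalars K).asModule := by
  rw [← isSemisimpleRepresentation_iff_isSemisimpleModule_asModule,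
    ← isSemisimpleRepresentation_iff_isSemisimpleModule_asModule]
  exact ⟨fun _ ↦ isSemisimpleRepresentation_extendScalars ρ,
    fun _ ↦ isSemisimpleRepresentation_of_extendScalars K⟩

/-- **Serre's question for `GL(V)`.** If `k₁/k` is a separable algebraic field
extension, `V` a finite-dimensional `k`-vector space and `H` a group acting
`k`-linearly on `V`, then `V` is a semisimple `k[H]`-module if and only if
`V ⊗[k] k₁` is a semisimple `k₁[H]`-module. -/
theorem semisimple_iff_semisimple_extendScalars_of_separable
    {k k₁ V H : Type*} [Field k] [Field k₁] [Algebra k k₁] [Algebra.IsAlgebraic k k₁]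
    [Algebra.IsSeparable k k₁]
    [AddCommGroup V] [Module k V] [FiniteDimensional k V] [Group H]
    (ρ : Representation k H V) :
    IsSemisimpleModule (MonoidAlgebra k H) ρ.asModule ↔
      IsSemisimpleModule (MonoidAlgebra k₁ H) (ρ.extendScalars k₁).asModule :=
  semisimple_iff_semisimple_extendScalars_of_separable_general ρ
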